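/- arXiv:1305.6765 — 2 statements merged into one kernel-verified Lean document; each statement's English description precedes it below -/
import Mathlib

section
/- Let b, c, p, q₀, ρ be real numbers, set b̃ = b + ρcp, and let χ > 0 satisfy χ² = c²p(p − 1) − b̃². If y, z, q : ℝ → ℝ are differentiable and satisfy, for all t, the correlated Stein–Stein Hamiltonian system y'(t) = z(t)²(p − 1/2) + ρc·z(t)·q(t), z'(t) = b̃·z(t) + c²·q(t), q'(t) = p·z(t)(1 − p) − b̃·q(t), with y(0) = z(0) = 0 and q(0) = q₀, then for all t: z(t) = (q₀c²/χ)·sin(χt), q(t) = q₀·(cos(χt) − (b̃/χ)·sin(χt)), and y(t) = (q₀²c²/(8χ³))·[(c²(2p − 1) − 2ρc·b̃)·(2χt − sin(2χt)) + 2ρc·χ·(1 − cos(2χt))]. Conversely, the functions defined by these formulas satisfy the system with these initial conditions. -/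
/-!
The pair `(z, q)` solves an autonomous linear system whose generator `A` is traceless, so by
Cayley–Hamilton `A² = -(det A) I = -χ² I`. Hence `exp (t A) = cos (χ t) I + (sin (χ t) / χ) A`,
which applied to `(0, q₀)` gives `z` and `q`. The right-hand side of the equation for `y` is then a
combination of `sin² (χ t)` and `sin (χ t) cos (χ t)`, which double-angle formulas integrate.
-/

section SquareNegScalar

variable {E : Type*} [NormedAddCommGroup E] [NormedSpace ℝ E] {A : E →L[ℝ] E} {ω : ℝ}

theorem hasDerivAt_cos_smul_add_sin_div_smul (hω : ω ≠ 0) (hA : ∀ x, A (A x) = -(ω ^ 2) • x)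
    (x : E) (t : ℝ) :
    HasDerivAt (fun s ↦ Real.cos (ω * s) • x + (Real.sin (ω * s) / ω) • A x)
      (A (Real.cos (ω * t) • x + (Real.sin (ω * t) / ω) • A x)) t := by
  have h_cos := (hasDerivAt_const_mul (x := t) ω).cos.smul_const x
  have h_sin := ((hasDerivAt_const_mul (x := t) ω).sin.div_const ω).smul_const (A x)
  refine (h_cos.add h_sin).congr_deriv ?_
  simp only [map_add, map_smul, hA]
  match_scalars <;> field_simp

theorem eq_cos_smul_add_sin_div_smul_of_hasDerivAt (hω : ω ≠ 0)
    (hA : ∀ x, A (A x) = -(ω ^ 2) • x) {w : ℝ → E} (hw : ∀ t, HasDerivAt w (A (w t)) t) :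
    w = fun t ↦ Real.cos (ω * t) • w 0 + (Real.sin (ω * t) / ω) • A (w 0) :=
  ODE_solution_unique_univ (v := fun _ ↦ A) (s := fun _ ↦ Set.univ) (t₀ := 0)
    (fun _ ↦ A.lipschitz.lipschitzOnWith)
    (fun t ↦ ⟨hw t, Set.mem_univ _⟩)
    (fun t ↦ ⟨hasDerivAt_cos_smul_add_sin_div_smul hω hA (w 0) t, Set.mem_univ _⟩)
    (by simp)

end SquareNegScalar

theorem hasDerivAt_two_mul_sub_sin_two_mul (ω t : ℝ) :
    HasDerivAt (fun s ↦ 2 * ω * s - Real.sin (2 * ω * s)) (4 * ω * Real.sin (ω * t) ^ 2) t := by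
  have h := hasDerivAt_const_mul (x := t) (2 * ω)
  refine (h.sub h.sin).congr_deriv ?_
  rw [mul_assoc 2 ω t, Real.cos_two_mul, Real.cos_sq']
  ring

theorem hasDerivAt_one_sub_cos_two_mul (ω t : ℝ) :
    HasDerivAt (fun s ↦ 1 - Real.cos (2 * ω * s))
      (4 * ω * (Real.sin (ω * t) * Real.cos (ω * t))) t := by
  refine ((hasDerivAt_const_mul (2 * ω)).cos.const_sub 1).congr_deriv ?_
  rw [mul_assoc 2 ω t, Real.sin_two_mul]
  ring

namespace SteinStein

/-- `(y, z, q)` is a global solution of the correlated Stein–Stein Hamiltonian system with constant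
momentum `p`. The parameter `β` stands for `b̃ = b + ρcp`. -/
structure IsHamiltonianFlow (β c p ρ : ℝ) (y z q : ℝ → ℝ) : Prop where
  hasDerivAt_y (t : ℝ) : HasDerivAt y (z t ^ 2 * (p - 1 / 2) + ρ * c * z t * q t) t
  hasDerivAt_z (t : ℝ) : HasDerivAt z (β * z t + c ^ 2 * q t) t
  hasDerivAt_q (t : ℝ) : HasDerivAt q (p * z t * (1 - p) - β * q t) t

/-- The generator of the linear subsystem satisfied by the pair `(z, q)`. -/
noncomputable def linearField (β c p : ℝ) : ℝ × ℝ →L[ℝ] ℝ × ℝ :=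
  (β • ContinuousLinearMap.fst ℝ ℝ ℝ + c ^ 2 • ContinuousLinearMap.snd ℝ ℝ ℝ).prod
    ((p * (1 - p)) • ContinuousLinearMap.fst ℝ ℝ ℝ - β • ContinuousLinearMap.snd ℝ ℝ ℝ)

/-- The `y`-component of the flow started at `(0, 0, q₀)`, in terms of the frequency `χ`,
where `χ² = c²p(p - 1) - β²`. -/
noncomputable def explicitY (β c p ρ χ q₀ t : ℝ) : ℝ :=
  q₀ ^ 2 * c ^ 2 / (8 * χ ^ 3) *
    ((c ^ 2 * (2 * p - 1) - 2 * ρ * c * β) * (2 * χ * t - Real.sin (2 * χ * t))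
      + 2 * ρ * c * χ * (1 - Real.cos (2 * χ * t)))

/-- The `z`-component of the flow started at `(0, 0, q₀)`, in terms of the frequency `χ`. -/
noncomputable def explicitZ (c χ q₀ t : ℝ) : ℝ :=
  q₀ * c ^ 2 / χ * Real.sin (χ * t)

/-- The `q`-component of the flow started at `(0, 0, q₀)`, in terms of the frequency `χ`. -/
noncomputable def explicitQ (β χ q₀ t : ℝ) : ℝ :=
  q₀ * (Real.cos (χ * t) - β / χ * Real.sin (χ * t))

variable {β c p ρ χ q₀ : ℝ}

theorem linearField_apply (x : ℝ × ℝ) :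
    linearField β c p x = (β * x.1 + c ^ 2 * x.2, p * x.1 * (1 - p) - β * x.2) := by
  ext <;> simp [linearField, mul_right_comm]

theorem linearField_linearField (hχ2 : χ ^ 2 = c ^ 2 * p * (p - 1) - β ^ 2) (x : ℝ × ℝ) :
    linearField β c p (linearField β c p x) = -(χ ^ 2) • x := by
  ext <;> simp only [linearField_apply, hχ2, Prod.smul_fst, Prod.smul_snd, smul_eq_mul] <;> ring

theorem explicitZ_explicitQ_eq (t : ℝ) :
    (explicitZ c χ q₀ t, explicitQ β χ q₀ t) =
      Real.cos (χ * t) • (0, q₀) + (Real.sin (χ * t) / χ) • linearField β c p (0, q₀) := by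
  ext <;> simp only [explicitZ, explicitQ, linearField_apply, Prod.fst_add, Prod.snd_add,
    Prod.smul_fst, Prod.smul_snd, smul_eq_mul] <;> ring

theorem hasDerivAt_explicitZ_explicitQ (hχ : χ ≠ 0)
    (hχ2 : χ ^ 2 = c ^ 2 * p * (p - 1) - β ^ 2) (t : ℝ) :
    HasDerivAt (fun s ↦ (explicitZ c χ q₀ s, explicitQ β χ q₀ s))
      (linearField β c p (explicitZ c χ q₀ t, explicitQ β χ q₀ t)) t := by
  simp only [explicitZ_explicitQ_eq (p := p)]
  exact hasDerivAt_cos_smul_add_sin_div_smul hχ (linearField_linearField hχ2) _ t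

theorem hasDerivAt_explicitY (hχ : χ ≠ 0) (t : ℝ) :
    HasDerivAt (explicitY β c p ρ χ q₀)
      (explicitZ c χ q₀ t ^ 2 * (p - 1 / 2)
        + ρ * c * explicitZ c χ q₀ t * explicitQ β χ q₀ t) t := by
  refine ((((hasDerivAt_two_mul_sub_sin_two_mul χ t).const_mul _).add
    ((hasDerivAt_one_sub_cos_two_mul χ t).const_mul _)).const_mul _).congr_deriv ?_
  simp only [explicitZ, explicitQ]
  field_simp
  ring

theorem isHamiltonianFlow_explicit (hχ : χ ≠ 0) (hχ2 : χ ^ 2 = c ^ 2 * p * (p - 1) - β ^ 2) :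
    IsHamiltonianFlow β c p ρ (explicitY β c p ρ χ q₀) (explicitZ c χ q₀) (explicitQ β χ q₀) where
  hasDerivAt_y := hasDerivAt_explicitY hχ
  hasDerivAt_z t := by
    have h_zq := hasDerivAt_explicitZ_explicitQ (q₀ := q₀) hχ hχ2 t
    rw [linearField_apply] at h_zq
    exact hasFDerivAt_fst.comp_hasDerivAt t h_zq
  hasDerivAt_q t := by
    have h_zq := hasDerivAt_explicitZ_explicitQ (q₀ := q₀) hχ hχ2 t
    rw [linearField_apply] at h_zq
    exact hasFDerivAt_snd.comp_hasDerivAt t h_zq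

namespace IsHamiltonianFlow

variable {y z q : ℝ → ℝ}

theorem hasDerivAt_prodMk (h : IsHamiltonianFlow β c p ρ y z q) (t : ℝ) :
    HasDerivAt (fun s ↦ (z s, q s)) (linearField β c p (z t, q t)) t := by
  rw [linearField_apply]
  exact (h.hasDerivAt_z t).prodMk (h.hasDerivAt_q t)

theorem prodMk_eq_explicit (h : IsHamiltonianFlow β c p ρ y z q) (hχ : χ ≠ 0)
    (hχ2 : χ ^ 2 = c ^ 2 * p * (p - 1) - β ^ 2) (hz₀ : z 0 = 0) (hq₀ : q 0 = q₀) (t : ℝ) :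
    (z t, q t) = (explicitZ c χ q₀ t, explicitQ β χ q₀ t) := by
  have h_flow := congrFun (eq_cos_smul_add_sin_div_smul_of_hasDerivAt hχ
    (linearField_linearField hχ2) h.hasDerivAt_prodMk) t
  rw [h_flow, hz₀, hq₀, explicitZ_explicitQ_eq]

theorem eq_explicit (h : IsHamiltonianFlow β c p ρ y z q) (hχ : χ ≠ 0)
    (hχ2 : χ ^ 2 = c ^ 2 * p * (p - 1) - β ^ 2) (hy₀ : y 0 = 0) (hz₀ : z 0 = 0)
    (hq₀ : q 0 = q₀) :
    z = explicitZ c χ q₀ ∧ q = explicitQ β χ q₀ ∧ y = explicitY β c p ρ χ q₀ := by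
  have h_zq := h.prodMk_eq_explicit hχ hχ2 hz₀ hq₀
  obtain rfl : z = explicitZ c χ q₀ := funext fun t ↦ congrArg Prod.fst (h_zq t)
  obtain rfl : q = explicitQ β χ q₀ := funext fun t ↦ congrArg Prod.snd (h_zq t)
  have hy' (t : ℝ) := hasDerivAt_explicitY (β := β) (c := c) (p := p) (ρ := ρ) (q₀ := q₀) hχ t
  refine ⟨rfl, rfl, eq_of_fderiv_eq (fun t ↦ (h.hasDerivAt_y t).differentiableAt)
    (fun t ↦ (hy' t).differentiableAt) (fun t ↦ ?_) 0 (by simp [hy₀, explicitY])⟩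
  exact (h.hasDerivAt_y t).hasFDerivAt.fderiv.trans (hy' t).hasFDerivAt.fderiv.symm

end IsHamiltonianFlow

end SteinStein

/-- Explicit solution of the correlated Stein–Stein Hamiltonian flow (with
`b̃ = b + ρcp`) started at `(y,z,q)(0) = (0,0,q₀)`, together with the converse
statement that the explicit formulas indeed solve the system. -/
theorem stein_stein_correlated_hamiltonian_flow
    (b c p q₀ ρ : ℝ) (χ : ℝ) (hχ : 0 < χ)
    (hχ2 : χ ^ 2 = c ^ 2 * p * (p - 1) - (b + ρ * c * p) ^ 2) :
    ((∀ y z q : ℝ → ℝ,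
      (∀ t : ℝ, HasDerivAt y (z t ^ 2 * (p - 1 / 2) + ρ * c * z t * q t) t) →
      (∀ t : ℝ, HasDerivAt z ((b + ρ * c * p) * z t + c ^ 2 * q t) t) →
      (∀ t : ℝ, HasDerivAt q (p * z t * (1 - p) - (b + ρ * c * p) * q t) t) →
      y 0 = 0 → z 0 = 0 → q 0 = q₀ →
      ∀ t : ℝ,
        z t = q₀ * c ^ 2 / χ * Real.sin (χ * t) ∧
        q t = q₀ * (Real.cos (χ * t) - (b + ρ * c * p) / χ * Real.sin (χ * t)) ∧
        y t = q₀ ^ 2 * c ^ 2 / (8 * χ ^ 3) *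
          ((c ^ 2 * (2 * p - 1) - 2 * ρ * c * (b + ρ * c * p)) * (2 * χ * t - Real.sin (2 * χ * t))
            + 2 * ρ * c * χ * (1 - Real.cos (2 * χ * t)))))
    ∧
    ((∀ t : ℝ,
      HasDerivAt (fun s : ℝ => q₀ ^ 2 * c ^ 2 / (8 * χ ^ 3) *
          ((c ^ 2 * (2 * p - 1) - 2 * ρ * c * (b + ρ * c * p)) * (2 * χ * s - Real.sin (2 * χ * s))
            + 2 * ρ * c * χ * (1 - Real.cos (2 * χ * s))))
        ((q₀ * c ^ 2 / χ * Real.sin (χ * t)) ^ 2 * (p - 1 / 2)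
          + ρ * c * (q₀ * c ^ 2 / χ * Real.sin (χ * t))
            * (q₀ * (Real.cos (χ * t) - (b + ρ * c * p) / χ * Real.sin (χ * t)))) t ∧
      HasDerivAt (fun s : ℝ => q₀ * c ^ 2 / χ * Real.sin (χ * s))
        ((b + ρ * c * p) * (q₀ * c ^ 2 / χ * Real.sin (χ * t))
          + c ^ 2 * (q₀ * (Real.cos (χ * t) - (b + ρ * c * p) / χ * Real.sin (χ * t)))) t ∧
      HasDerivAt (fun s : ℝ =>
          q₀ * (Real.cos (χ * s) - (b + ρ * c * p) / χ * Real.sin (χ * s)))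
        (p * (q₀ * c ^ 2 / χ * Real.sin (χ * t)) * (1 - p)
          - (b + ρ * c * p) * (q₀ * (Real.cos (χ * t) - (b + ρ * c * p) / χ * Real.sin (χ * t)))) t)
    ∧ q₀ ^ 2 * c ^ 2 / (8 * χ ^ 3) *
        ((c ^ 2 * (2 * p - 1) - 2 * ρ * c * (b + ρ * c * p)) * (2 * χ * 0 - Real.sin (2 * χ * 0))
          + 2 * ρ * c * χ * (1 - Real.cos (2 * χ * 0))) = 0
    ∧ q₀ * c ^ 2 / χ * Real.sin (χ * 0) = 0
    ∧ q₀ * (Real.cos (χ * 0) - (b + ρ * c * p) / χ * Real.sin (χ * 0)) = q₀) := by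
  constructor
  · intro y z q hy hz hq hy₀ hz₀ hq₀ t
    have h_flow : SteinStein.IsHamiltonianFlow (b + ρ * c * p) c p ρ y z q := ⟨hy, hz, hq⟩
    obtain ⟨hz_eq, hq_eq, hy_eq⟩ := h_flow.eq_explicit hχ.ne' hχ2 hy₀ hz₀ hq₀
    exact ⟨congrFun hz_eq t, congrFun hq_eq t, congrFun hy_eq t⟩
  · have h_flow := SteinStein.isHamiltonianFlow_explicit (ρ := ρ) (q₀ := q₀) hχ.ne' hχ2
    exact ⟨fun t ↦ ⟨h_flow.hasDerivAt_y t, h_flow.hasDerivAt_z t, h_flow.hasDerivAt_q t⟩,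
      by simp, by simp, by simp⟩
end

section
/- Let T > 0, b ≤ 0, c > 0 and a > 0. Let r₁ be the smallest strictly positive solution of r·cos r = bT·sin r, set p₁⁺ = (1/2)·(1 + √(1 + 4b²/c² + 4r₁²/(c²T²))), χ = r₁/T, and q₀ = (2/c²)·√(2r₁³a / ((2p₁⁺ − 1)T³(2r₁ − sin(2r₁)))). Then the infimum p₁⁺·a of the control energy (1/2)·∫₀ᵀ |ḣ(t)|² dt, over continuously differentiable controls h : [0,T] → ℝ² with h(0) = 0 steering the controlled system y' = −z²/2 + z·ḣ¹, z' = bz + c·ḣ², y(0) = z(0) = 0, to y(T) = a, is attained exactly at the two controls h₀⁺ and h₀⁻ with derivatives ḣ₀^{±,1}(t) = ± p₁⁺·(q₀c²/χ)·sin(χt) and ḣ₀^{±,2}(t) = ± c·q₀·(cos(χt) − (b/χ)·sin(χt)). -/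
/-!
Let `p` be the Lagrange multiplier of the constraint `y T = a`, chosen so that
`(p² - p) c² = b² + χ²`. Completing the square in `u = ḣ¹` and eliminating `v = ḣ²` through
`z' = b z + c v`, the doubled energy `∫ (u² + v²)` exceeds `2 p y(T)` by
`∫ (u - p z)² + c⁻² (∫ (z'² - χ² z²) - b z(T)²)`.
On `(0, T]` the function `q t = χ cot (χ t)` solves the Riccati equation `q' = -(χ² + q²)`, because
`χ T = r₁ < π`, and Picone's identity turns the last bracket into `∫ (z' - q z)²`: the boundary
term `q(T) z(T)²` is cancelled by `b z(T)²`, as the equation for `r₁` says exactly that `q(T) = b`,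
and at `0` the pole of `q` is absorbed by `z(0) = 0`. Hence the energy is at least `p a`, with
equality if and only if `u = p z` and `z' = q z`, that is `z t = K sin (χ t)`; the terminal
condition `y T = a` then determines `K²`, leaving the two signs of `K`.
-/

open Real Set MeasureTheory intervalIntegral

section IntervalCalculus

variable {a b : ℝ} {f f' : ℝ → ℝ}

theorem hasDerivWithinAt_integral_of_continuousOn_Icc (hf : ContinuousOn f (Icc a b))
    {t : ℝ} (ht : t ∈ Icc a b) :
    HasDerivWithinAt (fun x => ∫ s in a..x, f s) (f t) (Icc a b) t := by
  have : Fact (t ∈ Icc a b) := ⟨ht⟩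
  exact integral_hasDerivWithinAt_right
    ((hf.mono (Icc_subset_Icc_right ht.2)).intervalIntegrable_of_Icc ht.1)
    (hf.stronglyMeasurableAtFilter_nhdsWithin measurableSet_Icc t) (hf t ht)

theorem integral_eq_sub_of_hasDerivWithinAt_Icc (hab : a ≤ b) (hf' : ContinuousOn f' (Icc a b))
    (hf : ∀ t ∈ Icc a b, HasDerivWithinAt f (f' t) (Icc a b) t) :
    ∫ t in a..b, f' t = f b - f a :=
  integral_eq_sub_of_hasDerivAt_of_le hab (HasDerivWithinAt.continuousOn hf)
    (fun t ht => (hf t (Ioo_subset_Icc_self ht)).hasDerivAt (Icc_mem_nhds ht.1 ht.2))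
    (hf'.intervalIntegrable_of_Icc hab)

theorem eqOn_zero_of_integral_sq_eq_zero (hab : a ≤ b) (hf : ContinuousOn f (Ioo a b))
    (hint : IntervalIntegrable (fun t => f t ^ 2) volume a b) (h : ∫ t in a..b, f t ^ 2 = 0) :
    ∀ t ∈ Ioo a b, f t = 0 := by
  have hae : (fun t => f t ^ 2) =ᵐ[volume.restrict (Ioo a b)] 0 :=
    ae_restrict_of_ae_restrict_of_subset Ioo_subset_Ioc_self <|
      (integral_eq_zero_iff_of_le_of_nonneg_ae hab (ae_of_all _ fun t => sq_nonneg (f t)) hint).1 h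
  exact fun t ht => pow_eq_zero_iff two_ne_zero |>.1 <|
    Measure.eqOn_Ioo_of_ae_eq volume hae (hf.pow 2) continuousOn_const ht

/-- **Picone's identity**. Since `q` may blow up at the endpoints, the integrability of the square
is not automatic: it holds because the square is the derivative of a function continuous on
`[a, b]`. -/
theorem picone_of_riccati {κ : ℝ} {q z w : ℝ → ℝ} (hab : a ≤ b) (hw : ContinuousOn w (Icc a b))
    (hz : ∀ t ∈ Icc a b, HasDerivWithinAt z (w t) (Icc a b) t)
    (hq : ∀ t ∈ Ioo a b, HasDerivAt q (-(κ + q t ^ 2)) t)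
    (hqz : ContinuousOn (fun t => q t * z t ^ 2) (Icc a b)) :
    IntervalIntegrable (fun t => (w t - q t * z t) ^ 2) volume a b ∧
      ∫ t in a..b, (w t ^ 2 - κ * z t ^ 2) =
        q b * z b ^ 2 - q a * z a ^ 2 + ∫ t in a..b, (w t - q t * z t) ^ 2 := by
  have hzc : ContinuousOn z (Icc a b) := HasDerivWithinAt.continuousOn hz
  let F : ℝ → ℝ := fun t => (∫ s in a..t, (w s ^ 2 - κ * z s ^ 2)) - q t * z t ^ 2
  have hprim (t : ℝ) (ht : t ∈ Icc a b) := hasDerivWithinAt_integral_of_continuousOn_Icc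
    (f := fun s => w s ^ 2 - κ * z s ^ 2) (by fun_prop) ht
  have hFc : ContinuousOn F (Icc a b) := (HasDerivWithinAt.continuousOn hprim).sub hqz
  have hF : ∀ t ∈ Ioo a b, HasDerivAt F ((w t - q t * z t) ^ 2) t := by
    intro t ht
    have hnhds := Icc_mem_nhds ht.1 ht.2
    have htI := Ioo_subset_Icc_self ht
    refine (((hprim t htI).hasDerivAt hnhds).sub
      ((hq t ht).mul (((hz t htI).hasDerivAt hnhds).pow 2))).congr_deriv ?_
    simp only [Pi.pow_apply]
    push_cast
    ring
  have hint : IntervalIntegrable (fun t => (w t - q t * z t) ^ 2) volume a b :=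
    (intervalIntegrable_iff_integrableOn_Ioc_of_le hab).2 <|
      integrableOn_deriv_of_nonneg hFc hF fun t _ => sq_nonneg _
  refine ⟨hint, ?_⟩
  rw [integral_eq_sub_of_hasDerivAt_of_le hab hFc hF hint]
  simp only [F, integral_same]
  ring

end IntervalCalculus

section Cotangent

variable {T χ : ℝ} {z w : ℝ → ℝ}

theorem sin_mul_pos (hχ : 0 < χ) (hχT : χ * T < π) {t : ℝ} (ht : t ∈ Ioc 0 T) :
    0 < sin (χ * t) :=
  sin_pos_of_pos_of_lt_pi (mul_pos hχ ht.1)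
    ((mul_le_mul_of_nonneg_left ht.2 hχ.le).trans_lt hχT)

theorem hasDerivAt_sin_mul (χ t : ℝ) :
    HasDerivAt (fun t => sin (χ * t)) (χ * cos (χ * t)) t := by
  simpa [mul_comm] using ((hasDerivAt_id t).const_mul χ).sin

theorem hasDerivAt_mul_cot_mul {t : ℝ} (ht : sin (χ * t) ≠ 0) :
    HasDerivAt (fun t => χ * cot (χ * t)) (-(χ ^ 2 + (χ * cot (χ * t)) ^ 2)) t := by
  have hcos : HasDerivAt (fun t => cos (χ * t)) (-(χ * sin (χ * t))) t := by
    simpa [mul_comm] using ((hasDerivAt_id t).const_mul χ).cos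
  simp only [cot_eq_cos_div_sin]
  refine ((hcos.div (hasDerivAt_sin_mul χ t) ht).const_mul χ).congr_deriv ?_
  field_simp
  ring

/-- The simple pole of `cot` at `0` is cancelled by the double zero of `z²`. -/
theorem continuousWithinAt_mul_cot_mul_sq {w₀ : ℝ} {s : Set ℝ} (hχ : χ ≠ 0)
    (hz : HasDerivWithinAt z w₀ s 0) (hz₀ : z 0 = 0) :
    ContinuousWithinAt (fun t => χ * cot (χ * t) * z t ^ 2) s 0 := by
  have hsin : HasDerivWithinAt (fun t => sin (χ * t)) χ s 0 := by
    simpa using (hasDerivAt_sin_mul χ 0).hasDerivWithinAt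
  have hratio := (hasDerivWithinAt_iff_tendsto_slope.1 hz).div
    (hasDerivWithinAt_iff_tendsto_slope.1 hsin) hχ
  have hcosz : ContinuousWithinAt (fun t => χ * cos (χ * t) * z t) (s \ {0}) 0 :=
    (by fun_prop : Continuous fun t => χ * cos (χ * t)).continuousWithinAt.mul
      (hz.continuousWithinAt.mono sdiff_subset)
  rw [← continuousWithinAt_sdiff_self]
  have hprod := hcosz.tendsto.mul hratio
  simp only [hz₀, mul_zero, zero_mul] at hprod
  simp only [ContinuousWithinAt, hz₀, mul_zero, ne_eq, OfNat.ofNat_ne_zero, not_false_eq_true,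
    zero_pow]
  refine hprod.congr' ?_
  filter_upwards [self_mem_nhdsWithin] with t ht
  have ht₀ : t ≠ 0 := ht.2
  simp only [slope_def_field, hz₀, mul_zero, sin_zero, sub_zero, Pi.div_apply,
    div_div_div_cancel_right₀ ht₀, cot_eq_cos_div_sin]
  ring

theorem picone_cot (hT : 0 ≤ T) (hχ : 0 < χ) (hχT : χ * T < π) (hw : ContinuousOn w (Icc 0 T))
    (hz : ∀ t ∈ Icc 0 T, HasDerivWithinAt z (w t) (Icc 0 T) t) (hz₀ : z 0 = 0) :
    IntervalIntegrable (fun t => (w t - χ * cot (χ * t) * z t) ^ 2) volume 0 T ∧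
      ∫ t in 0..T, (w t ^ 2 - χ ^ 2 * z t ^ 2) =
        χ * cot (χ * T) * z T ^ 2 + ∫ t in 0..T, (w t - χ * cot (χ * t) * z t) ^ 2 := by
  have hcot (t : ℝ) (ht : t ∈ Ioc 0 T) := hasDerivAt_mul_cot_mul (sin_mul_pos hχ hχT ht).ne'
  have hcotz : ContinuousOn (fun t => χ * cot (χ * t) * z t ^ 2) (Icc 0 T) := by
    intro t ht
    rcases ht.1.eq_or_lt with rfl | hpos
    · exact continuousWithinAt_mul_cot_mul_sq hχ.ne' (hz 0 ht) hz₀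
    · exact (hcot t ⟨hpos, ht.2⟩).continuousAt.continuousWithinAt.mul
        ((hz t ht).continuousWithinAt.pow 2)
  simpa [hz₀] using
    picone_of_riccati hT hw hz (fun t ht => hcot t (Ioo_subset_Ioc_self ht)) hcotz

theorem exists_eq_mul_sin_of_deriv_eq_cot_mul (hT : 0 < T) (hχ : 0 < χ) (hχT : χ * T < π)
    (hzc : ContinuousOn z (Icc 0 T))
    (hz : ∀ t ∈ Ioo 0 T, HasDerivAt z (χ * cot (χ * t) * z t) t) :
    ∃ K, EqOn z (fun t => K * sin (χ * t)) (Icc 0 T) := by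
  have hsin (t : ℝ) (ht : t ∈ Ioo 0 T) := (sin_mul_pos hχ hχT (Ioo_subset_Ioc_self ht)).ne'
  have hquot : ∀ t ∈ Ioo 0 T, HasDerivAt (fun t => z t / sin (χ * t)) 0 t := by
    intro t ht
    refine ((hz t ht).div (hasDerivAt_sin_mul χ t) (hsin t ht)).congr_deriv ?_
    rw [cot_eq_cos_div_sin]
    field_simp [hsin t ht]
    ring
  obtain ⟨K, hK⟩ := isOpen_Ioo.exists_is_const_of_deriv_eq_zero isPreconnected_Ioo
    (fun t ht => (hquot t ht).differentiableAt.differentiableWithinAt)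
    (fun t ht => (hquot t ht).deriv)
  refine ⟨K, EqOn.of_subset_closure (fun t ht => ?_) hzc (by fun_prop) Ioo_subset_Icc_self
    (closure_Ioo hT.ne).ge⟩
  exact (div_eq_iff (hsin t ht)).1 (hK t ht)

theorem integral_sin_mul_sq (hχ : χ ≠ 0) (T : ℝ) :
    ∫ t in 0..T, sin (χ * t) ^ 2 = (2 * (χ * T) - sin (2 * (χ * T))) / (4 * χ) := by
  rw [integral_comp_mul_left (fun x => sin x ^ 2) hχ, integral_sin_sq, sin_two_mul]
  simp only [mul_zero, sin_zero, zero_mul, smul_eq_mul]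
  field_simp
  ring

end Cotangent

/-- A solution `(y, z)` on `[0, T]`, started at `(0, 0)`, of the Stein–Stein control system
`y' = -z²/2 + z u`, `z' = b z + c v`. The continuous functions `u` and `v` are the derivatives
`ḣ¹` and `ḣ²` of the control; the control itself does not enter the dynamics. -/
structure SteinSteinTrajectory (T b c : ℝ) (u v y z : ℝ → ℝ) : Prop where
  continuousOn_fst : ContinuousOn u (Icc 0 T)
  continuousOn_snd : ContinuousOn v (Icc 0 T)
  hasDerivWithinAt_price :
    ∀ t ∈ Icc 0 T, HasDerivWithinAt y (-(z t ^ 2) / 2 + z t * u t) (Icc 0 T) t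
  hasDerivWithinAt_vol : ∀ t ∈ Icc 0 T, HasDerivWithinAt z (b * z t + c * v t) (Icc 0 T) t
  price_zero : y 0 = 0
  vol_zero : z 0 = 0

/-- The energy `½ ∫₀ᵀ |ḣ|²` of a control, in terms of its derivative `(u, v)`. -/
noncomputable def controlEnergy (T : ℝ) (u v : ℝ → ℝ) : ℝ :=
  (1 / 2) * ∫ t in 0..T, (u t ^ 2 + v t ^ 2)

/-- The relations satisfied by the frequency `χ` of the extremal volatility and the Lagrange
multiplier `p` of the constraint on the terminal log-price. -/
structure ExtremalParameters (T b c p χ : ℝ) : Prop where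
  pos : 0 < χ
  mul_lt_pi : χ * T < π
  mul_cot : χ * cot (χ * T) = b
  half_lt : 1 / 2 < p
  multiplier : (p ^ 2 - p) * c ^ 2 = b ^ 2 + χ ^ 2

namespace SteinSteinTrajectory

variable {T b c p χ : ℝ} {u v y z : ℝ → ℝ}

theorem continuousOn_vol (h : SteinSteinTrajectory T b c u v y z) : ContinuousOn z (Icc 0 T) :=
  HasDerivWithinAt.continuousOn h.hasDerivWithinAt_vol

theorem integral_price_deriv (h : SteinSteinTrajectory T b c u v y z) (hT : 0 ≤ T) :
    ∫ t in 0..T, (-(z t ^ 2) / 2 + z t * u t) = y T := by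
  have hz := h.continuousOn_vol
  have hu := h.continuousOn_fst
  rw [integral_eq_sub_of_hasDerivWithinAt_Icc hT (by fun_prop) h.hasDerivWithinAt_price,
    h.price_zero, sub_zero]

theorem integral_vol_mul_deriv (h : SteinSteinTrajectory T b c u v y z) (hT : 0 ≤ T) :
    ∫ t in 0..T, 2 * z t * (b * z t + c * v t) = z T ^ 2 := by
  have hz := h.continuousOn_vol
  have hv := h.continuousOn_snd
  rw [integral_eq_sub_of_hasDerivWithinAt_Icc (f := fun t => z t ^ 2) hT (by fun_prop)
    fun t ht => ((h.hasDerivWithinAt_vol t ht).pow 2).congr_deriv (by push_cast; ring),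
    h.vol_zero]
  ring

/-- The parameter `p` is the Lagrange multiplier of the constraint on `y T`, and `p² - p` is
chosen so that the terms in `z²` combine to `z'² - χ² z²`. -/
theorem two_mul_energy_eq (h : SteinSteinTrajectory T b c u v y z) (hT : 0 ≤ T) (hc : c ≠ 0)
    (hp : (p ^ 2 - p) * c ^ 2 = b ^ 2 + χ ^ 2) :
    2 * controlEnergy T u v = 2 * p * y T + (∫ t in 0..T, (u t - p * z t) ^ 2) +
      (1 / c ^ 2) * ((∫ t in 0..T, ((b * z t + c * v t) ^ 2 - χ ^ 2 * z t ^ 2)) - b * z T ^ 2) := by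
  have hz := h.continuousOn_vol
  have hu := h.continuousOn_fst
  have hv := h.continuousOn_snd
  have hint {f : ℝ → ℝ} (hf : ContinuousOn f (Icc 0 T)) : IntervalIntegrable f volume 0 T :=
    hf.intervalIntegrable_of_Icc hT
  have hpointwise (t : ℝ) : u t ^ 2 + v t ^ 2 =
      2 * p * (-(z t ^ 2) / 2 + z t * u t) + (u t - p * z t) ^ 2 +
        (1 / c ^ 2) * (((b * z t + c * v t) ^ 2 - χ ^ 2 * z t ^ 2) -
          b * (2 * z t * (b * z t + c * v t))) := by
    field_simp
    linear_combination -(z t ^ 2) * hp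
  simp only [controlEnergy, hpointwise]
  rw [integral_add (hint (by fun_prop)) (hint (by fun_prop)),
    integral_add (hint (by fun_prop)) (hint (by fun_prop)),
    intervalIntegral.integral_const_mul, intervalIntegral.integral_const_mul,
    integral_sub (hint (by fun_prop)) (hint (by fun_prop)), intervalIntegral.integral_const_mul,
    h.integral_price_deriv hT, h.integral_vol_mul_deriv hT]
  ring

theorem energy_eq (h : SteinSteinTrajectory T b c u v y z) (hT : 0 ≤ T) (hc : c ≠ 0)
    (hpar : ExtremalParameters T b c p χ) :
    controlEnergy T u v = p * y T + (1 / 2) * (∫ t in 0..T, (u t - p * z t) ^ 2) +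
      (1 / (2 * c ^ 2)) * ∫ t in 0..T, (b * z t + c * v t - χ * cot (χ * t) * z t) ^ 2 := by
  have hz := h.continuousOn_vol
  have hv := h.continuousOn_snd
  have hsplit := h.two_mul_energy_eq hT hc hpar.multiplier
  rw [(picone_cot hT hpar.pos hpar.mul_lt_pi (by fun_prop) h.hasDerivWithinAt_vol h.vol_zero).2,
    hpar.mul_cot] at hsplit
  linear_combination (1 / 2) * hsplit

theorem mul_price_le_energy (h : SteinSteinTrajectory T b c u v y z) (hT : 0 ≤ T) (hc : c ≠ 0)
    (hpar : ExtremalParameters T b c p χ) :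
    p * y T ≤ controlEnergy T u v := by
  rw [h.energy_eq hT hc hpar, add_assoc]
  have hsq (f : ℝ → ℝ) : 0 ≤ ∫ t in 0..T, f t ^ 2 := integral_nonneg hT fun t _ => sq_nonneg _
  exact le_add_of_nonneg_right
    (add_nonneg (mul_nonneg (by norm_num) (hsq _)) (mul_nonneg (by positivity) (hsq _)))

theorem eqOn_of_energy_eq_mul_price (h : SteinSteinTrajectory T b c u v y z) (hT : 0 ≤ T)
    (hc : c ≠ 0) (hpar : ExtremalParameters T b c p χ) (hE : controlEnergy T u v = p * y T) :
    ∀ t ∈ Ioo 0 T, u t = p * z t ∧ b * z t + c * v t = χ * cot (χ * t) * z t := by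
  have hz := h.continuousOn_vol
  have hu := h.continuousOn_fst
  have hv := h.continuousOn_snd
  have hI : 0 ≤ ∫ t in 0..T, (u t - p * z t) ^ 2 := integral_nonneg hT fun t _ => sq_nonneg _
  have hJ : 0 ≤ (1 / (2 * c ^ 2)) *
      ∫ t in 0..T, (b * z t + c * v t - χ * cot (χ * t) * z t) ^ 2 :=
    mul_nonneg (by positivity) (integral_nonneg hT fun t _ => sq_nonneg _)
  have hsplit := h.energy_eq hT hc hpar
  have hI₀ : ∫ t in 0..T, (u t - p * z t) ^ 2 = 0 := by linarith
  have hJ₀ : ∫ t in 0..T, (b * z t + c * v t - χ * cot (χ * t) * z t) ^ 2 = 0 :=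
    (mul_eq_zero.1 (by linarith : (1 / (2 * c ^ 2)) * _ = 0)).resolve_left (by positivity)
  have hcot : ContinuousOn (fun t => χ * cot (χ * t)) (Ioo 0 T) := fun t ht =>
    have hsin := (sin_mul_pos hpar.pos hpar.mul_lt_pi (Ioo_subset_Ioc_self ht)).ne'
    (hasDerivAt_mul_cot_mul hsin).continuousAt.continuousWithinAt
  have hmono {f : ℝ → ℝ} (hf : ContinuousOn f (Icc 0 T)) := hf.mono Ioo_subset_Icc_self
  have hu₀ := eqOn_zero_of_integral_sq_eq_zero hT (hmono (by fun_prop))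
    (ContinuousOn.intervalIntegrable_of_Icc hT (by fun_prop)) hI₀
  have hv₀ := eqOn_zero_of_integral_sq_eq_zero hT
    ((hmono (by fun_prop : ContinuousOn (fun t => b * z t + c * v t) _)).sub (hcot.mul (hmono hz)))
    (picone_cot hT hpar.pos hpar.mul_lt_pi (by fun_prop) h.hasDerivWithinAt_vol h.vol_zero).1 hJ₀
  exact fun t ht => ⟨sub_eq_zero.1 (hu₀ t ht), sub_eq_zero.1 (hv₀ t ht)⟩

end SteinSteinTrajectory

/-- The derivative `ḣ¹` of the extremal control that steers the volatility along
`t ↦ K sin (χ t)`. -/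
noncomputable def extremalControlFst (p χ K t : ℝ) : ℝ :=
  p * (K * sin (χ * t))

/-- The derivative `ḣ²` of the extremal control that steers the volatility along
`t ↦ K sin (χ t)`. -/
noncomputable def extremalControlSnd (b c χ K t : ℝ) : ℝ :=
  K / c * (χ * cos (χ * t) - b * sin (χ * t))

/-- The terminal log-price `(p - 1/2) ∫₀ᵀ (K sin (χ t))² dt` reached by the extremal control with
amplitude `K`. -/
noncomputable def extremalPrice (T p χ K : ℝ) : ℝ :=
  (2 * p - 1) * K ^ 2 * (2 * (χ * T) - sin (2 * (χ * T))) / (8 * χ)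

section Extremal

variable {T b c p χ K : ℝ} {u v y z : ℝ → ℝ}

theorem continuous_extremalControlFst : Continuous (extremalControlFst p χ K) := by
  unfold extremalControlFst
  fun_prop

theorem continuous_extremalControlSnd : Continuous (extremalControlSnd b c χ K) := by
  unfold extremalControlSnd
  fun_prop

theorem add_mul_extremalControlSnd (hc : c ≠ 0) (t : ℝ) :
    b * (K * sin (χ * t)) + c * extremalControlSnd b c χ K t = K * (χ * cos (χ * t)) := by
  unfold extremalControlSnd
  field_simp
  ring

namespace SteinSteinTrajectory

theorem exists_extremalControl (hc : c ≠ 0) (T b p χ K : ℝ) :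
    ∃ y, SteinSteinTrajectory T b c (extremalControlFst p χ K) (extremalControlSnd b c χ K) y
      (fun t => K * sin (χ * t)) := by
  have hu := continuous_extremalControlFst (p := p) (χ := χ) (K := K)
  refine ⟨fun t => ∫ s in 0..t, (-((K * sin (χ * s)) ^ 2) / 2 +
    K * sin (χ * s) * extremalControlFst p χ K s), hu.continuousOn,
    continuous_extremalControlSnd.continuousOn, fun t ht => ?_, fun t _ => ?_, integral_same,
    by simp⟩
  · exact hasDerivWithinAt_integral_of_continuousOn_Icc
      (f := fun s => -((K * sin (χ * s)) ^ 2) / 2 + K * sin (χ * s) * extremalControlFst p χ K s)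
      (by fun_prop) ht
  · rw [add_mul_extremalControlSnd hc]
    exact ((hasDerivAt_sin_mul χ t).const_mul K).hasDerivWithinAt

theorem price_eq_of_extremal (h : SteinSteinTrajectory T b c u v y z) (hT : 0 ≤ T) (hχ : χ ≠ 0)
    (hz : EqOn z (fun t => K * sin (χ * t)) (Icc 0 T))
    (hu : EqOn u (extremalControlFst p χ K) (Icc 0 T)) :
    y T = extremalPrice T p χ K := by
  have hcongr : ∀ t ∈ uIcc 0 T, -(z t ^ 2) / 2 + z t * u t =
      (p - 1 / 2) * K ^ 2 * sin (χ * t) ^ 2 := by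
    intro t ht
    rw [uIcc_of_le hT] at ht
    rw [hz ht, hu ht, extremalControlFst]
    ring
  rw [← h.integral_price_deriv hT, integral_congr hcongr, intervalIntegral.integral_const_mul,
    integral_sin_mul_sq hχ, extremalPrice]
  field_simp
  ring

theorem energy_eq_mul_price_of_extremal
    (h : SteinSteinTrajectory T b c (extremalControlFst p χ K) (extremalControlSnd b c χ K) y
      (fun t => K * sin (χ * t)))
    (hT : 0 ≤ T) (hc : c ≠ 0) (hpar : ExtremalParameters T b c p χ) :
    controlEnergy T (extremalControlFst p χ K) (extremalControlSnd b c χ K) = p * y T := by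
  have hcot : ∫ t in 0..T, (b * (K * sin (χ * t)) + c * extremalControlSnd b c χ K t -
      χ * cot (χ * t) * (K * sin (χ * t))) ^ 2 = 0 := by
    rw [integral_congr_Ioo_of_le (g := fun _ => 0) hT, intervalIntegral.integral_zero]
    intro t ht
    have hsin := (sin_mul_pos hpar.pos hpar.mul_lt_pi (Ioo_subset_Ioc_self ht)).ne'
    simp only [add_mul_extremalControlSnd hc, cot_eq_cos_div_sin]
    field_simp
    ring
  rw [h.energy_eq hT hc hpar, hcot]
  simp [extremalControlFst]

theorem exists_eqOn_extremalControl (h : SteinSteinTrajectory T b c u v y z) (hT : 0 < T)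
    (hc : c ≠ 0) (hpar : ExtremalParameters T b c p χ) (hE : controlEnergy T u v = p * y T) :
    ∃ K, EqOn z (fun t => K * sin (χ * t)) (Icc 0 T) ∧
      EqOn u (extremalControlFst p χ K) (Icc 0 T) ∧
      EqOn v (extremalControlSnd b c χ K) (Icc 0 T) := by
  have hopt := h.eqOn_of_energy_eq_mul_price hT.le hc hpar hE
  obtain ⟨K, hzK⟩ := exists_eq_mul_sin_of_deriv_eq_cot_mul hT hpar.pos hpar.mul_lt_pi
    h.continuousOn_vol fun t ht => ((h.hasDerivWithinAt_vol t (Ioo_subset_Icc_self ht)).hasDerivAt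
      (Icc_mem_nhds ht.1 ht.2)).congr_deriv (hopt t ht).2
  have hext {f g : ℝ → ℝ} (hf : ContinuousOn f (Icc 0 T)) (hg : Continuous g)
      (hfg : EqOn f g (Ioo 0 T)) : EqOn f g (Icc 0 T) :=
    hfg.of_subset_closure hf hg.continuousOn Ioo_subset_Icc_self (closure_Ioo hT.ne).ge
  refine ⟨K, hzK, hext h.continuousOn_fst continuous_extremalControlFst fun t ht => ?_,
    hext h.continuousOn_snd continuous_extremalControlSnd fun t ht => ?_⟩
  · rw [(hopt t ht).1, hzK (Ioo_subset_Icc_self ht), extremalControlFst]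
  · have hsin := (sin_mul_pos hpar.pos hpar.mul_lt_pi (Ioo_subset_Ioc_self ht)).ne'
    have hvt := (hopt t ht).2
    rw [hzK (Ioo_subset_Icc_self ht), cot_eq_cos_div_sin] at hvt
    unfold extremalControlSnd
    field_simp at hvt ⊢
    linarith

end SteinSteinTrajectory

end Extremal

section Parameters

variable {T b c a r : ℝ}

theorem lt_pi_of_forall_root_le {β : ℝ} (hβ : β < 1)
    (hmin : ∀ s : ℝ, 0 < s → s * cos s = β * sin s → r ≤ s) : r < π := by
  set γ := max β 0
  set s₀ := arccos γ
  have hs₀ : 0 < s₀ := arccos_pos.2 (max_lt hβ one_pos)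
  have hcos : cos s₀ = γ := cos_arccos (by linarith [le_max_right β 0]) (max_lt hβ one_pos).le
  have hsin : 0 ≤ sin s₀ := sin_nonneg_of_nonneg_of_le_pi hs₀.le (arccos_le_pi γ)
  have hs₀_nonneg : 0 ≤ s₀ * cos s₀ - β * sin s₀ := by
    rw [hcos, mul_comm]
    exact sub_nonneg.2 <| (mul_le_mul_of_nonneg_right (le_max_left β 0) hsin).trans
      (mul_le_mul_of_nonneg_left (sin_lt hs₀).le (le_max_right β 0))
  have hpi_neg : π * cos π - β * sin π < 0 := by simp [pi_pos]
  obtain ⟨s, hs, hroot⟩ := intermediate_value_Icc' (f := fun s => s * cos s - β * sin s)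
    (arccos_le_pi γ) (by fun_prop) ⟨hpi_neg.le, hs₀_nonneg⟩
  have hs_ne : s ≠ π := by
    rintro rfl
    exact hpi_neg.ne hroot
  exact (hmin s (hs₀.trans_le hs.1) (sub_eq_zero.1 hroot)).trans_lt (hs.2.lt_of_ne hs_ne)

theorem extremalParameters_of_root (hT : 0 < T) (hc : c ≠ 0) (hr : 0 < r) (hrπ : r < π)
    (hroot : r * cos r = b * T * sin r) :
    ExtremalParameters T b c
      (1 / 2 * (1 + √(1 + 4 * b ^ 2 / c ^ 2 + 4 * r ^ 2 / (c ^ 2 * T ^ 2)))) (r / T) where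
  pos := div_pos hr hT
  mul_lt_pi := by rwa [div_mul_cancel₀ r hT.ne']
  mul_cot := by
    have hsin := (sin_pos_of_pos_of_lt_pi hr hrπ).ne'
    rw [div_mul_cancel₀ r hT.ne', cot_eq_cos_div_sin]
    field_simp
    linear_combination hroot
  half_lt := by
    have : 0 < √(1 + 4 * b ^ 2 / c ^ 2 + 4 * r ^ 2 / (c ^ 2 * T ^ 2)) := by positivity
    linarith
  multiplier := by
    have hsqrt := sq_sqrt (by positivity : 0 ≤ 1 + 4 * b ^ 2 / c ^ 2 + 4 * r ^ 2 / (c ^ 2 * T ^ 2))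
    have : (b ^ 2 / c ^ 2 + r ^ 2 / (c ^ 2 * T ^ 2)) * c ^ 2 = b ^ 2 + (r / T) ^ 2 := by
      field_simp
    linear_combination c ^ 2 / 4 * hsqrt + this

theorem extremalPrice_amplitude {p q : ℝ} (hT : 0 < T) (hc : c ≠ 0) (ha : 0 ≤ a) (hr : 0 < r)
    (hp : 1 / 2 < p)
    (hq : q = 2 / c ^ 2 *
      √(2 * r ^ 3 * a / ((2 * p - 1) * T ^ 3 * (2 * r - sin (2 * r))))) :
    extremalPrice T p (r / T) (q * c ^ 2 / (r / T)) = a := by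
  have hp₂ : 0 < 2 * p - 1 := by linarith
  have hr₂ : 0 < 2 * r - sin (2 * r) := sub_pos.2 (sin_lt (mul_pos two_pos hr))
  have hsqrt := sq_sqrt
    (by positivity : 0 ≤ 2 * r ^ 3 * a / ((2 * p - 1) * T ^ 3 * (2 * r - sin (2 * r))))
  have hK : q * c ^ 2 / (r / T) =
      2 * T / r * √(2 * r ^ 3 * a / ((2 * p - 1) * T ^ 3 * (2 * r - sin (2 * r)))) := by
    rw [hq]
    field_simp
  rw [extremalPrice, hK, div_mul_cancel₀ r hT.ne', mul_pow, hsqrt]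
  field_simp
  ring

end Parameters

section Steering

/-- The control `(h₁, h₂)` with derivative `(u, v)` steers the system from `(0, 0)` along `(y, z)`
to the terminal log-price `y T = a`. -/
def Steers (T b c a : ℝ) (h₁ h₂ u v y z : ℝ → ℝ) : Prop :=
  (∀ t ∈ Icc 0 T, HasDerivWithinAt h₁ (u t) (Icc 0 T) t) ∧
  (∀ t ∈ Icc 0 T, HasDerivWithinAt h₂ (v t) (Icc 0 T) t) ∧
  h₁ 0 = 0 ∧ h₂ 0 = 0 ∧
  (∀ t ∈ Icc 0 T, HasDerivWithinAt y (-(z t ^ 2) / 2 + z t * u t) (Icc 0 T) t) ∧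
  (∀ t ∈ Icc 0 T, HasDerivWithinAt z (b * z t + c * v t) (Icc 0 T) t) ∧
  y 0 = 0 ∧ z 0 = 0 ∧ y T = a

variable {T b c a p χ K : ℝ} {h₁ h₂ u v y z : ℝ → ℝ}

theorem Steers.trajectory (h : Steers T b c a h₁ h₂ u v y z) (hu : ContinuousOn u (Icc 0 T))
    (hv : ContinuousOn v (Icc 0 T)) : SteinSteinTrajectory T b c u v y z :=
  let ⟨_, _, _, _, hy, hz, hy₀, hz₀, _⟩ := h
  ⟨hu, hv, hy, hz, hy₀, hz₀⟩

theorem Steers.price_eq (h : Steers T b c a h₁ h₂ u v y z) : y T = a :=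
  let ⟨_, _, _, _, _, _, _, _, hyT⟩ := h
  hyT

theorem SteinSteinTrajectory.exists_steers (h : SteinSteinTrajectory T b c u v y z) :
    ∃ h₁ h₂, Steers T b c (y T) h₁ h₂ u v y z :=
  ⟨_, _, fun _ ht => hasDerivWithinAt_integral_of_continuousOn_Icc h.continuousOn_fst ht,
    fun _ ht => hasDerivWithinAt_integral_of_continuousOn_Icc h.continuousOn_snd ht,
    intervalIntegral.integral_same, intervalIntegral.integral_same, h.hasDerivWithinAt_price,
    h.hasDerivWithinAt_vol, h.price_zero, h.vol_zero, rfl⟩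

theorem exists_steers_extremalControl (hT : 0 ≤ T) (hc : c ≠ 0)
    (hpar : ExtremalParameters T b c p χ) (hK : extremalPrice T p χ K = a) :
    ∃ h₁ h₂ y z, Steers T b c a h₁ h₂ (extremalControlFst p χ K) (extremalControlSnd b c χ K) y z ∧
      controlEnergy T (extremalControlFst p χ K) (extremalControlSnd b c χ K) = p * a := by
  obtain ⟨y, htraj⟩ := SteinSteinTrajectory.exists_extremalControl hc T b p χ K
  have hyT : y T = a :=
    (htraj.price_eq_of_extremal hT hpar.pos.ne' (eqOn_refl _ _) (eqOn_refl _ _)).trans hK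
  obtain ⟨h₁, h₂, hsteers⟩ := htraj.exists_steers
  exact ⟨h₁, h₂, y, _, hyT ▸ hsteers, hyT ▸ htraj.energy_eq_mul_price_of_extremal hT hc hpar⟩

theorem Steers.exists_sign_eqOn_extremalControl (h : Steers T b c a h₁ h₂ u v y z)
    (hu : ContinuousOn u (Icc 0 T)) (hv : ContinuousOn v (Icc 0 T)) (hT : 0 < T) (hc : c ≠ 0)
    (hpar : ExtremalParameters T b c p χ) (hK : extremalPrice T p χ K = a)
    (hE : controlEnergy T u v = p * a) :
    ∃ ε : ℝ, (ε = 1 ∨ ε = -1) ∧ EqOn u (extremalControlFst p χ (ε * K)) (Icc 0 T) ∧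
      EqOn v (extremalControlSnd b c χ (ε * K)) (Icc 0 T) := by
  have htraj := h.trajectory hu hv
  obtain ⟨K', hzK, huK, hvK⟩ :=
    htraj.exists_eqOn_extremalControl hT hc hpar (h.price_eq.symm ▸ hE)
  have hprice := htraj.price_eq_of_extremal hT.le hpar.pos.ne' hzK huK
  have hχ := hpar.pos
  have hp : 0 < 2 * p - 1 := by linarith [hpar.half_lt]
  have hsin : 0 < 2 * (χ * T) - sin (2 * (χ * T)) := sub_pos.2 (sin_lt (by positivity))
  rw [h.price_eq, ← hK, extremalPrice, extremalPrice] at hprice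
  have hcoeff : (2 * p - 1) * (2 * (χ * T) - sin (2 * (χ * T))) / (8 * χ) ≠ 0 := by positivity
  have hsq : K' ^ 2 = K ^ 2 := mul_left_cancel₀ hcoeff (by linear_combination -hprice)
  rcases sq_eq_sq_iff_eq_or_eq_neg.1 hsq with rfl | rfl
  · exact ⟨1, .inl rfl, by rwa [one_mul], by rwa [one_mul]⟩
  · exact ⟨-1, .inr rfl, by rwa [neg_one_mul], by rwa [neg_one_mul]⟩

end Steering

section Minimizers

variable {b c p q χ ε : ℝ}

theorem extremalControlFst_mul_div (t : ℝ) :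
    extremalControlFst p χ (ε * (q * c ^ 2 / χ)) t =
      ε * (p * (q * c ^ 2 / χ) * sin (χ * t)) := by
  unfold extremalControlFst
  ring

theorem extremalControlSnd_mul_div (hc : c ≠ 0) (hχ : χ ≠ 0) (t : ℝ) :
    extremalControlSnd b c χ (ε * (q * c ^ 2 / χ)) t =
      ε * (c * q * (cos (χ * t) - b / χ * sin (χ * t))) := by
  unfold extremalControlSnd
  field_simp

end Minimizers

theorem stein_stein_uncorrelated_minimizers_general
    (T b c a : ℝ) (hT : 0 < T) (hbT : b * T < 1) (hc : c ≠ 0) (ha : 0 ≤ a)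
    (r₁ : ℝ) (hr₁ : 0 < r₁)
    (hroot : r₁ * cos r₁ = b * T * sin r₁)
    (hmin : ∀ r : ℝ, 0 < r → r * cos r = b * T * sin r → r₁ ≤ r)
    (p₁ χ q₀ : ℝ)
    (hp₁ : p₁ = (1 / 2) * (1 + √(1 + 4 * b ^ 2 / c ^ 2 + 4 * r₁ ^ 2 / (c ^ 2 * T ^ 2))))
    (hχ : χ = r₁ / T)
    (hq₀ : q₀ = (2 / c ^ 2) *
      √(2 * r₁ ^ 3 * a / ((2 * p₁ - 1) * T ^ 3 * (2 * r₁ - sin (2 * r₁))))) :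
    IsLeast
      {E : ℝ | ∃ h₁ h₂ u v y z : ℝ → ℝ, ContinuousOn u (Icc 0 T) ∧ ContinuousOn v (Icc 0 T) ∧
        Steers T b c a h₁ h₂ u v y z ∧ E = controlEnergy T u v}
      (p₁ * a) ∧
    (∀ ε : ℝ, ε = 1 ∨ ε = -1 → ∃ h₁ h₂ y z : ℝ → ℝ,
      Steers T b c a h₁ h₂
        (fun t => ε * (p₁ * (q₀ * c ^ 2 / χ) * sin (χ * t)))
        (fun t => ε * (c * q₀ * (cos (χ * t) - b / χ * sin (χ * t)))) y z ∧
      controlEnergy T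
        (fun t => ε * (p₁ * (q₀ * c ^ 2 / χ) * sin (χ * t)))
        (fun t => ε * (c * q₀ * (cos (χ * t) - b / χ * sin (χ * t)))) = p₁ * a) ∧
    ∀ h₁ h₂ u v y z : ℝ → ℝ, ContinuousOn u (Icc 0 T) → ContinuousOn v (Icc 0 T) →
      Steers T b c a h₁ h₂ u v y z → controlEnergy T u v = p₁ * a →
      (∀ t ∈ Icc 0 T, u t = p₁ * (q₀ * c ^ 2 / χ) * sin (χ * t) ∧
        v t = c * q₀ * (cos (χ * t) - b / χ * sin (χ * t))) ∨
      ∀ t ∈ Icc 0 T, u t = -(p₁ * (q₀ * c ^ 2 / χ) * sin (χ * t)) ∧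
        v t = -(c * q₀ * (cos (χ * t) - b / χ * sin (χ * t))) := by
  have hpar : ExtremalParameters T b c p₁ χ := by
    rw [hp₁, hχ]
    exact extremalParameters_of_root hT hc hr₁ (lt_pi_of_forall_root_le hbT hmin) hroot
  have hχ₀ := hpar.pos.ne'
  have hprice : extremalPrice T p₁ χ (q₀ * c ^ 2 / χ) = a := by
    rw [hχ]
    exact extremalPrice_amplitude hT hc ha hr₁ hpar.half_lt hq₀
  refine ⟨⟨?_, ?_⟩, fun ε hε => ?_, fun h₁ h₂ u v y z hu hv hsteers hE => ?_⟩
  · obtain ⟨h₁, h₂, y, z, hsteers, hE⟩ := exists_steers_extremalControl hT.le hc hpar hprice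
    exact ⟨h₁, h₂, _, _, y, z, continuous_extremalControlFst.continuousOn,
      continuous_extremalControlSnd.continuousOn, hsteers, hE.symm⟩
  · rintro _ ⟨h₁, h₂, u, v, y, z, hu, hv, hsteers, rfl⟩
    simpa only [hsteers.price_eq] using
      (hsteers.trajectory hu hv).mul_price_le_energy hT.le hc hpar
  · have hε_sq : ε ^ 2 = 1 := sq_eq_one_iff.2 hε
    simpa only [← extremalControlFst_mul_div, ← extremalControlSnd_mul_div hc hχ₀] using
      exists_steers_extremalControl hT.le hc hpar (K := ε * (q₀ * c ^ 2 / χ))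
        (by rwa [extremalPrice, mul_pow, hε_sq, one_mul])
  · obtain ⟨ε, hε, huε, hvε⟩ :=
      hsteers.exists_sign_eqOn_extremalControl hu hv hT hc hpar hprice hE
    have hvalues (t : ℝ) (ht : t ∈ Icc 0 T) := And.intro
      ((huε ht).trans (extremalControlFst_mul_div t))
      ((hvε ht).trans (extremalControlSnd_mul_div hc hχ₀ t))
    rcases hε with rfl | rfl
    · exact .inl (by simpa only [one_mul] using hvalues)
    · exact .inr (by simpa only [neg_one_mul] using hvalues)

/-- In the uncorrelated Stein–Stein control problem, the minimal energy `p₁⁺·a` is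
attained exactly at the two controls `h₀⁺`, `h₀⁻` with the explicitly given
derivatives (differing only by a sign). -/
theorem stein_stein_uncorrelated_minimizers
    (T b c a : ℝ) (hT : 0 < T) (hb : b ≤ 0) (hc : 0 < c) (ha : 0 < a)
    (r₁ : ℝ) (hr₁ : 0 < r₁)
    (hroot : r₁ * Real.cos r₁ = b * T * Real.sin r₁)
    (hmin : ∀ r : ℝ, 0 < r → r * Real.cos r = b * T * Real.sin r → r₁ ≤ r)
    (p₁ χ q₀ : ℝ)
    (hp₁ : p₁ = (1 / 2) * (1 + Real.sqrt (1 + 4 * b ^ 2 / c ^ 2 + 4 * r₁ ^ 2 / (c ^ 2 * T ^ 2))))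
    (hχ : χ = r₁ / T)
    (hq₀ : q₀ = (2 / c ^ 2) *
      Real.sqrt (2 * r₁ ^ 3 * a / ((2 * p₁ - 1) * T ^ 3 * (2 * r₁ - Real.sin (2 * r₁))))) :
    -- the value `p₁·a` is the least energy, attained
    (IsLeast
      {E : ℝ | ∃ h₁ h₂ h₁d h₂d y z : ℝ → ℝ,
        ContinuousOn h₁d (Set.Icc (0 : ℝ) T) ∧ ContinuousOn h₂d (Set.Icc (0 : ℝ) T) ∧
        (∀ t ∈ Set.Icc (0 : ℝ) T, HasDerivWithinAt h₁ (h₁d t) (Set.Icc (0 : ℝ) T) t) ∧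
        (∀ t ∈ Set.Icc (0 : ℝ) T, HasDerivWithinAt h₂ (h₂d t) (Set.Icc (0 : ℝ) T) t) ∧
        h₁ 0 = 0 ∧ h₂ 0 = 0 ∧
        (∀ t ∈ Set.Icc (0 : ℝ) T,
          HasDerivWithinAt y (-(z t ^ 2) / 2 + z t * h₁d t) (Set.Icc (0 : ℝ) T) t) ∧
        (∀ t ∈ Set.Icc (0 : ℝ) T,
          HasDerivWithinAt z (b * z t + c * h₂d t) (Set.Icc (0 : ℝ) T) t) ∧
        y 0 = 0 ∧ z 0 = 0 ∧ y T = a ∧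
        E = (1 / 2) * ∫ t in (0 : ℝ)..T, (h₁d t ^ 2 + h₂d t ^ 2)}
      (p₁ * a)) ∧
    -- the two explicit controls are admissible
    (∀ ε : ℝ, ε = 1 ∨ ε = -1 →
      ∃ h₁ h₂ y z : ℝ → ℝ,
        (∀ t ∈ Set.Icc (0 : ℝ) T,
          HasDerivWithinAt h₁ (ε * (p₁ * (q₀ * c ^ 2 / χ) * Real.sin (χ * t)))
            (Set.Icc (0 : ℝ) T) t) ∧
        (∀ t ∈ Set.Icc (0 : ℝ) T,
          HasDerivWithinAt h₂
            (ε * (c * q₀ * (Real.cos (χ * t) - b / χ * Real.sin (χ * t))))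
            (Set.Icc (0 : ℝ) T) t) ∧
        h₁ 0 = 0 ∧ h₂ 0 = 0 ∧
        (∀ t ∈ Set.Icc (0 : ℝ) T,
          HasDerivWithinAt y
            (-(z t ^ 2) / 2 + z t * (ε * (p₁ * (q₀ * c ^ 2 / χ) * Real.sin (χ * t))))
            (Set.Icc (0 : ℝ) T) t) ∧
        (∀ t ∈ Set.Icc (0 : ℝ) T,
          HasDerivWithinAt z
            (b * z t + c * (ε * (c * q₀ * (Real.cos (χ * t) - b / χ * Real.sin (χ * t)))))
            (Set.Icc (0 : ℝ) T) t) ∧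
        y 0 = 0 ∧ z 0 = 0 ∧ y T = a ∧
        (1 / 2) * (∫ t in (0 : ℝ)..T,
            ((ε * (p₁ * (q₀ * c ^ 2 / χ) * Real.sin (χ * t))) ^ 2
              + (ε * (c * q₀ * (Real.cos (χ * t) - b / χ * Real.sin (χ * t)))) ^ 2))
          = p₁ * a) ∧
    -- exactness: any admissible control attaining the value `p₁·a` is one of the two
    (∀ h₁ h₂ h₁d h₂d y z : ℝ → ℝ,
      ContinuousOn h₁d (Set.Icc (0 : ℝ) T) → ContinuousOn h₂d (Set.Icc (0 : ℝ) T) →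
      (∀ t ∈ Set.Icc (0 : ℝ) T, HasDerivWithinAt h₁ (h₁d t) (Set.Icc (0 : ℝ) T) t) →
      (∀ t ∈ Set.Icc (0 : ℝ) T, HasDerivWithinAt h₂ (h₂d t) (Set.Icc (0 : ℝ) T) t) →
      h₁ 0 = 0 → h₂ 0 = 0 →
      (∀ t ∈ Set.Icc (0 : ℝ) T,
        HasDerivWithinAt y (-(z t ^ 2) / 2 + z t * h₁d t) (Set.Icc (0 : ℝ) T) t) →
      (∀ t ∈ Set.Icc (0 : ℝ) T,
        HasDerivWithinAt z (b * z t + c * h₂d t) (Set.Icc (0 : ℝ) T) t) →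
      y 0 = 0 → z 0 = 0 → y T = a →
      (1 / 2) * (∫ t in (0 : ℝ)..T, (h₁d t ^ 2 + h₂d t ^ 2)) = p₁ * a →
      ((∀ t ∈ Set.Icc (0 : ℝ) T,
          h₁d t = p₁ * (q₀ * c ^ 2 / χ) * Real.sin (χ * t) ∧
          h₂d t = c * q₀ * (Real.cos (χ * t) - b / χ * Real.sin (χ * t))) ∨
        (∀ t ∈ Set.Icc (0 : ℝ) T,
          h₁d t = -(p₁ * (q₀ * c ^ 2 / χ) * Real.sin (χ * t)) ∧
          h₂d t = -(c * q₀ * (Real.cos (χ * t) - b / χ * Real.sin (χ * t)))))) := by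
  simpa only [Steers, controlEnergy, and_assoc, and_imp] using
    stein_stein_uncorrelated_minimizers_general T b c a hT
      ((mul_nonpos_of_nonpos_of_nonneg hb hT.le).trans_lt one_pos) hc.ne' ha.le
      r₁ hr₁ hroot hmin p₁ χ q₀ hp₁ hχ hq₀
end
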